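/- Let Λ = ω₁ℤ + ω₂ℤ with ω₁ > 0 real, Im ω₂ > 0, and ω₁·Im ω₂ = π/2. There exists a constant K > 1, depending only on Λ, such that for every integer N ≥ 1 and every real β > 0, the torus packing number satisfies 1 ≤ Θ_{N,β}(ℂ/Λ) ≤ K^β. -/

import Mathlib

open MeasureTheory

/-- The lattice `Λ = ω₁ℤ + ω₂ℤ` as a subset of `ℂ`. -/
def latticeSet (ω₁ ω₂ : ℂ) : Set ℂ :=
  {w : ℂ | ∃ m n : ℤ, w = (m : ℂ) * ω₁ + (n : ℂ) * ω₂}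

/-- The Weierstrass sigma function of the lattice `ω₁ℤ + ω₂ℤ`. -/
noncomputable def wSigma (ω₁ ω₂ : ℂ) (z : ℂ) : ℂ :=
  z * ∏' p : {p : ℤ × ℤ // p ≠ 0},
      (1 - z / ((p.1.1 : ℂ) * ω₁ + (p.1.2 : ℂ) * ω₂)) *
        Complex.exp (z / ((p.1.1 : ℂ) * ω₁ + (p.1.2 : ℂ) * ω₂) +
          z ^ 2 / (2 * ((p.1.1 : ℂ) * ω₁ + (p.1.2 : ℂ) * ω₂) ^ 2))

/-- The Weierstrass zeta function `ζ = σ'/σ`. -/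
noncomputable def wZeta (ω₁ ω₂ : ℂ) (z : ℂ) : ℂ :=
  deriv (wSigma ω₁ ω₂) z / wSigma ω₁ ω₂ z

/-- The quasi-period `λ₁ = 2ζ(ω₁/2)`. -/
noncomputable def lambda1 (ω₁ ω₂ : ℂ) : ℂ := 2 * wZeta ω₁ ω₂ (ω₁ / 2)

/-- The constant `b = 1 − λ₁/(2ω₁)`. -/
noncomputable def bconst (ω₁ ω₂ : ℂ) : ℂ := 1 - lambda1 ω₁ ω₂ / (2 * ω₁)

/-- The modified Weierstrass sigma function `σ_*(z) = e^{b z²} σ(z)`. -/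
noncomputable def sigmaStar (ω₁ ω₂ : ℂ) (z : ℂ) : ℂ :=
  Complex.exp (bconst ω₁ ω₂ * z ^ 2) * wSigma ω₁ ω₂ z

/-- A fundamental domain of the lattice `ω₁ℤ + ω₂ℤ`. -/
def fundDomain (ω₁ ω₂ : ℂ) : Set ℂ :=
  (fun p : ℝ × ℝ => (p.1 : ℂ) * ω₁ + (p.2 : ℂ) * ω₂) ''
    (Set.Ico (0 : ℝ) 1 ×ˢ Set.Ico (0 : ℝ) 1)

/-- The normalizing constant `A_Λ`. -/
noncomputable def Aconst (ω₁ ω₂ : ℂ) : ℝ :=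
  2 / Real.pi * ∫ z in fundDomain ω₁ ω₂, (Real.log ‖sigmaStar ω₁ ω₂ z‖ - ‖z‖ ^ 2)

/-- The unipolar Green function of the torus `ℂ/Λ`. -/
noncomputable def Utorus (ω₁ ω₂ : ℂ) (z w : ℂ) : ℝ :=
  Real.log ‖sigmaStar ω₁ ω₂ (z - w)‖ - ‖z - w‖ ^ 2 - Aconst ω₁ ω₂

/-- The monic first degree pseudopolynomial on the torus with root `α`. -/
noncomputable def pseudoPoly (ω₁ ω₂ : ℂ) (α z : ℂ) : ℂ :=
  Complex.exp (2 * Complex.I * ((((starRingEnd ℂ) α) * z).im : ℂ)) *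
    (Complex.exp (-((‖z - α‖ ^ 2 : ℝ) : ℂ)) * sigmaStar ω₁ ω₂ (z - α))

/-- The torus packing number `Θ_{N,β}(ℂ/Λ)`. -/
noncomputable def ThetaTorus (ω₁ ω₂ : ℂ) (N : ℕ) (β : ℝ) : ℝ :=
  ⨅ w : Fin N → ℂ,
    2 / Real.pi *
      ∫ z in fundDomain ω₁ ω₂, Real.exp (∑ j, β * Utorus ω₁ ω₂ z (w j))

/-!
Write `v` for the function on `ℂ / Λ` induced by `log |σ_*(z)| - |z|²`, so that `Θ_{N,β}` is the
infimum over `w₁, …, w_N` of the mean of `exp (β ∑ⱼ (v(· - wⱼ) - ∫ v))`. The exponent has mean zero,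
so `1 + a ≤ exp a` gives the lower bound.

For the upper bound it suffices that for every `N` some sum of `N` translates of `v - ∫ v` is
bounded above by a constant independent of `N`. If `N = n²`, translate by the `n`-torsion points
`gⱼ`: the functions `∏ⱼ |σ_*(z - gⱼ)| exp(-|z - gⱼ|²)` and `|σ_*(nz)| exp(-|nz|²)` are proportional
by Liouville's theorem, whence `∑ⱼ v(x - gⱼ) = c + v(nx)`. Since multiplication by `n` preserves the
Haar measure, the centered sum is `v(nx) - ∫ v`, which is at most `max v - ∫ v`. A general `N` is a
sum of four squares.

The periodicity of `|σ_*(z)| exp(-|z|²)` rests on Legendre's relation `η₁ω₂ - η₂ω₁ = 2πi`, obtained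
by comparing branches of the logarithm of the sigma product on a period parallelogram centered at
`0`.
-/

section WeierstrassProduct

open Complex Filter Topology

/-- The index set of the product defining `wSigma`. -/
abbrev NonzeroIndex : Type := {p : ℤ × ℤ // p ≠ 0}

/-- The factor `(1 - z / w) exp (z / w + z² / (2 w²))` of genus two with its zero at `w`. -/
noncomputable def weierstrassFactor (w z : ℂ) : ℂ :=
  (1 - z / w) * exp (z / w + z ^ 2 / (2 * w ^ 2))

/-- The principal logarithm of the genus two factor `(1 - u) exp (u + u² / 2)`. -/
noncomputable def logFactor (u : ℂ) : ℂ := log (1 - u) + u + u ^ 2 / 2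

lemma differentiable_weierstrassFactor (w : ℂ) : Differentiable ℂ (weierstrassFactor w) := by
  unfold weierstrassFactor
  fun_prop

lemma weierstrassFactor_neg_neg (w z : ℂ) :
    weierstrassFactor (-w) (-z) = weierstrassFactor w z := by
  simp [weierstrassFactor]

lemma exp_logFactor {w z : ℂ} (h : z / w ≠ 1) :
    exp (logFactor (z / w)) = weierstrassFactor w z := by
  rw [logFactor, add_assoc, exp_add, exp_log (sub_ne_zero.2 h.symm), weierstrassFactor, div_pow,
    div_div, mul_comm (w ^ 2)]

lemma weierstrassFactor_ne_zero {w z : ℂ} (hw : w ≠ 0) (h : z ≠ w) : weierstrassFactor w z ≠ 0 := by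
  rw [← exp_logFactor (by rwa [Ne, div_eq_one_iff_eq hw])]
  exact exp_ne_zero _

lemma logFactor_norm_le {u : ℂ} (hu : ‖u‖ ≤ 1 / 2) : ‖logFactor u‖ ≤ ‖u‖ ^ 3 := by
  have h := norm_log_sub_logTaylor_le 2 (z := -u) (by rw [norm_neg]; linarith)
  have hTaylor : log (1 + -u) - logTaylor (2 + 1) (-u) = logFactor u := by
    simp only [Nat.reduceAdd, logTaylor_succ, logTaylor_zero, zero_add, pow_one, pow_zero, mul_one,
      CharP.cast_eq_zero, div_zero, even_two, Even.neg_pow, one_pow, one_mul, Nat.cast_one,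
      div_one, Nat.cast_ofNat, Pi.add_apply, add_zero, logFactor]
    ring_nf
  have hinv : (1 - ‖u‖)⁻¹ ≤ 2 := by
    rw [inv_le_comm₀ (by linarith) (by norm_num)]; linarith
  rw [hTaylor, norm_neg] at h
  calc ‖logFactor u‖ ≤ ‖u‖ ^ 3 * (1 - ‖u‖)⁻¹ / 3 := by norm_num at h; exact h
    _ ≤ ‖u‖ ^ 3 * 2 / 3 := by gcongr
    _ ≤ ‖u‖ ^ 3 := by linarith [pow_nonneg (norm_nonneg u) 3]

lemma weierstrassFactor_sub_one_norm_le {w z : ℂ} (hu : ‖z / w‖ ≤ 1 / 2) :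
    ‖weierstrassFactor w z - 1‖ ≤ 2 * ‖z / w‖ ^ 3 := by
  have hlog := logFactor_norm_le hu
  have hone : ‖z / w‖ ^ 3 ≤ 1 := pow_le_one₀ (norm_nonneg _) (by linarith)
  rw [← exp_logFactor (by rintro h; norm_num [h] at hu)]
  exact (norm_exp_sub_one_le (hlog.trans hone)).trans (by linarith)

lemma logDeriv_weierstrassFactor {w z : ℂ} (hw : w ≠ 0) (h : z ≠ w) :
    logDeriv (weierstrassFactor w) z = 1 / (z - w) + 1 / w + z / w ^ 2 := by
  have hlin : HasDerivAt (fun y : ℂ => 1 - y / w) (-(1 / w)) z :=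
    ((hasDerivAt_id z).div_const w).const_sub 1
  have hexp : HasDerivAt (fun y : ℂ => exp (y / w + y ^ 2 / (2 * w ^ 2)))
      (exp (z / w + z ^ 2 / (2 * w ^ 2)) * (1 / w + 2 * z / (2 * w ^ 2))) z := by
    refine HasDerivAt.cexp (((hasDerivAt_id z).div_const w).add ?_)
    simpa using (hasDerivAt_pow 2 z).div_const (2 * w ^ 2)
  have hne : 1 - z / w ≠ 0 := by rwa [Ne, sub_eq_zero, eq_comm, div_eq_one_iff_eq hw]
  have hmul := logDeriv_mul (f := fun y => 1 - y / w)
    (g := fun y => exp (y / w + y ^ 2 / (2 * w ^ 2))) z hne (exp_ne_zero _) hlin.differentiableAt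
    hexp.differentiableAt
  have hsub : z - w ≠ 0 := sub_ne_zero.2 h
  have hsub' : w - z ≠ 0 := sub_ne_zero.2 h.symm
  calc logDeriv (weierstrassFactor w) z
      = -(1 / w) / (1 - z / w) + (1 / w + 2 * z / (2 * w ^ 2)) := by
        refine hmul.trans ?_
        rw [logDeriv_apply, logDeriv_apply, hlin.deriv, hexp.deriv,
          mul_div_cancel_left₀ _ (exp_ne_zero _)]
    _ = 1 / (z - w) + 1 / w + z / w ^ 2 := by
        rw [one_sub_div hw]
        field_simp
        ring

lemma tendstoLocallyUniformlyOn_logDeriv {ι : Type*} {l : Filter ι} {F : ι → ℂ → ℂ} {f : ℂ → ℂ}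
    {U : Set ℂ} [l.NeBot] (hU : IsOpen U) (hF : TendstoLocallyUniformlyOn F f l U)
    (hd : ∀ i, DifferentiableOn ℂ (F i) U) (hf : ∀ z ∈ U, f z ≠ 0) :
    TendstoLocallyUniformlyOn (fun i => logDeriv (F i)) (logDeriv f) l U := by
  have hfd := hF.differentiableOn (.of_forall hd) hU
  exact (hF.deriv (.of_forall hd) hU).div₀ hF (hfd.deriv hU).continuousOn hfd.continuousOn hf

variable (L : PeriodPair)

/-- The point `m ω₁ + n ω₂` of the lattice with coordinates `(m, n)`. -/
noncomputable def latticePoint (p : NonzeroIndex) : ℂ := (p.1.1 : ℂ) * L.ω₁ + (p.1.2 : ℂ) * L.ω₂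

/-- The Weierstrass product `σ(z) / z`, extended over the zero at the origin. -/
noncomputable def sigmaProd (z : ℂ) : ℂ := ∏' p, weierstrassFactor (latticePoint L p) z

lemma wSigma_eq_mul_sigmaProd (z : ℂ) : wSigma L.ω₁ L.ω₂ z = z * sigmaProd L z := rfl

lemma latticePoint_eq (p : NonzeroIndex) :
    latticePoint L p = (L.latticeEquivProd.symm p.1 : ℂ) :=
  (L.latticeEquiv_symm_apply p.1).symm

lemma latticePoint_mem (p : NonzeroIndex) : latticePoint L p ∈ L.lattice :=
  PeriodPair.mem_lattice.2 ⟨_, _, rfl⟩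

lemma latticePoint_ne_zero (p : NonzeroIndex) : latticePoint L p ≠ 0 := by
  rw [latticePoint_eq]
  exact fun h => p.2 (by simpa using Subtype.ext (a2 := (0 : L.lattice)) h)

lemma ne_latticePoint {z : ℂ} (hz : z ∉ L.lattice) (p : NonzeroIndex) : z ≠ latticePoint L p :=
  fun h => hz (h ▸ latticePoint_mem L p)

/-- The involution of the index set that corresponds to `w ↦ -w` on the lattice. -/
def NonzeroIndex.negEquiv : NonzeroIndex ≃ NonzeroIndex :=
  (Equiv.neg (ℤ × ℤ)).subtypeEquiv (by simp)

lemma latticePoint_negEquiv (p : NonzeroIndex) :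
    latticePoint L (NonzeroIndex.negEquiv p) = -latticePoint L p := by
  simp only [latticePoint, ne_eq, NonzeroIndex.negEquiv, Equiv.subtypeEquiv_apply,
    Equiv.neg_apply, Prod.fst_neg, Int.cast_neg, neg_mul, Prod.snd_neg, neg_add_rev]
  ring

lemma summable_norm_latticePoint_inv_cube : Summable fun p => ‖latticePoint L p‖⁻¹ ^ 3 := by
  have h := ZLattice.summable_norm_pow_inv L.lattice 3 (by simp)
  refine ((L.latticeEquivProd.symm.toEquiv.summable_iff.2 h).subtype {p | p ≠ 0}).congr fun p => ?_
  rw [latticePoint_eq]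
  rfl

lemma eventually_norm_div_latticePoint_le_half (R : ℝ) :
    ∀ᶠ p in cofinite, ∀ z : ℂ, ‖z‖ ≤ R → ‖z / latticePoint L p‖ ≤ 1 / 2 := by
  have hpos : (0 : ℝ) < (1 / (2 * (|R| + 1))) ^ 3 := by positivity
  filter_upwards [(summable_norm_latticePoint_inv_cube L).tendsto_cofinite_zero.eventually_le_const
    hpos] with p hp z hz
  have hinv : ‖latticePoint L p‖⁻¹ ≤ 1 / (2 * (|R| + 1)) :=
    le_of_pow_le_pow_left₀ (by norm_num) (by positivity) hp
  calc ‖z / latticePoint L p‖ = ‖z‖ * ‖latticePoint L p‖⁻¹ := by rw [norm_div, div_eq_mul_inv]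
    _ ≤ (|R| + 1) * (1 / (2 * (|R| + 1))) := by
        gcongr
        exact hz.trans ((le_abs_self R).trans (by linarith))
    _ = 1 / 2 := by field_simp

lemma norm_div_latticePoint_cube_le {R : ℝ} (p : NonzeroIndex) {z : ℂ} (hz : ‖z‖ ≤ R) :
    ‖z / latticePoint L p‖ ^ 3 ≤ R ^ 3 * ‖latticePoint L p‖⁻¹ ^ 3 := by
  rw [norm_div, div_eq_mul_inv, mul_pow]
  gcongr

lemma eventually_weierstrassFactor_sub_one_norm_le (R : ℝ) :
    ∀ᶠ p in cofinite, ∀ z : ℂ, ‖z‖ ≤ R →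
      ‖weierstrassFactor (latticePoint L p) z - 1‖ ≤ 2 * (R ^ 3 * ‖latticePoint L p‖⁻¹ ^ 3) := by
  filter_upwards [eventually_norm_div_latticePoint_le_half L R] with p hp z hz
  exact (weierstrassFactor_sub_one_norm_le (hp z hz)).trans
    (by gcongr; exact norm_div_latticePoint_cube_le L p hz)

lemma hasProdLocallyUniformlyOn_sigmaProd :
    HasProdLocallyUniformlyOn (fun p z => weierstrassFactor (latticePoint L p) z) (sigmaProd L)
      Set.univ := by
  refine hasProdLocallyUniformlyOn_of_forall_compact isOpen_univ fun S _ hS => ?_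
  obtain ⟨R, hR⟩ := hS.isBounded.exists_norm_le
  have h := Summable.hasProdUniformlyOn_one_add
    (f := fun p z => weierstrassFactor (latticePoint L p) z - 1) hS
    (((summable_norm_latticePoint_inv_cube L).mul_left (R ^ 3)).mul_left 2)
    ((eventually_weierstrassFactor_sub_one_norm_le L R).mono fun p hp z hz => hp z (hR z hz))
    fun p => ((differentiable_weierstrassFactor _).continuous.sub continuous_const).continuousOn
  simp only [add_sub_cancel] at h
  exact h

lemma tendstoLocallyUniformlyOn_sigmaProd :
    TendstoLocallyUniformlyOn (fun S z => ∏ p ∈ S, weierstrassFactor (latticePoint L p) z)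
      (sigmaProd L) atTop Set.univ :=
  hasProdLocallyUniformlyOn_iff_tendstoLocallyUniformlyOn.1 (hasProdLocallyUniformlyOn_sigmaProd L)

lemma differentiable_prod_weierstrassFactor (S : Finset NonzeroIndex) :
    Differentiable ℂ fun z => ∏ p ∈ S, weierstrassFactor (latticePoint L p) z :=
  Differentiable.fun_finsetProd fun _ _ => differentiable_weierstrassFactor _

lemma differentiable_sigmaProd : Differentiable ℂ (sigmaProd L) :=
  differentiableOn_univ.1 <| (tendstoLocallyUniformlyOn_sigmaProd L).differentiableOn
    (.of_forall fun S => (differentiable_prod_weierstrassFactor L S).differentiableOn) isOpen_univ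

lemma sigmaProd_zero : sigmaProd L 0 = 1 := by
  simp [sigmaProd, weierstrassFactor]

lemma sigmaProd_neg (z : ℂ) : sigmaProd L (-z) = sigmaProd L z := by
  rw [sigmaProd, sigmaProd, ← NonzeroIndex.negEquiv.tprod_eq]
  exact tprod_congr fun p => by rw [latticePoint_negEquiv, weierstrassFactor_neg_neg]

lemma sigmaProd_ne_zero {z : ℂ} (hz : z ∉ L.lattice) : sigmaProd L z ≠ 0 := by
  have hsum : Summable fun p => ‖weierstrassFactor (latticePoint L p) z - 1‖ := by
    refine .of_norm_bounded_eventually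
      (((summable_norm_latticePoint_inv_cube L).mul_left (‖z‖ ^ 3)).mul_left 2) ?_
    filter_upwards [eventually_weierstrassFactor_sub_one_norm_le L ‖z‖] with p hp
    simpa only [norm_norm] using hp z le_rfl
  have h := tprod_one_add_ne_zero_of_summable (fun p => by
    simpa using weierstrassFactor_ne_zero (latticePoint_ne_zero L p) (ne_latticePoint L hz p)) hsum
  simpa only [sigmaProd, add_sub_cancel] using h

lemma differentiable_wSigma : Differentiable ℂ (wSigma L.ω₁ L.ω₂) :=
  differentiable_id.mul (differentiable_sigmaProd L)

lemma wSigma_zero : wSigma L.ω₁ L.ω₂ 0 = 0 := by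
  simp [wSigma_eq_mul_sigmaProd]

lemma wSigma_neg (z : ℂ) : wSigma L.ω₁ L.ω₂ (-z) = -wSigma L.ω₁ L.ω₂ z := by
  rw [wSigma_eq_mul_sigmaProd, wSigma_eq_mul_sigmaProd, sigmaProd_neg, neg_mul]

lemma wSigma_ne_zero {z : ℂ} (hz : z ∉ L.lattice) : wSigma L.ω₁ L.ω₂ z ≠ 0 :=
  mul_ne_zero (by rintro rfl; exact hz (zero_mem _)) (sigmaProd_ne_zero L hz)

lemma deriv_wSigma_zero : deriv (wSigma L.ω₁ L.ω₂) 0 = 1 := by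
  have h := ((hasDerivAt_id (0 : ℂ)).mul (differentiable_sigmaProd L 0).hasDerivAt).deriv
  simp only [sigmaProd_zero, mul_one, id_eq, zero_mul, add_zero] at h
  exact h

end WeierstrassProduct

section QuasiPeriodicity

open Complex Filter Topology

variable (L : PeriodPair)

lemma isOpen_compl_lattice : IsOpen ((L.lattice : Set ℂ)ᶜ) := L.isClosed_lattice.isOpen_compl

lemma countable_lattice : (L.lattice : Set ℂ).Countable :=
  have : Countable L.lattice := L.latticeEquivProd.toEquiv.injective.countable
  Set.to_countable _

lemma isPreconnected_compl_lattice : IsPreconnected ((L.lattice : Set ℂ)ᶜ) :=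
  ((countable_lattice L).isConnected_compl_of_one_lt_rank (by simp)).isPreconnected

lemma eq_of_hasDerivAt_zero_compl_lattice {f : ℂ → ℂ} (hf : ∀ z ∉ L.lattice, HasDerivAt f 0 z)
    {x y : ℂ} (hx : x ∉ L.lattice) (hy : y ∉ L.lattice) : f x = f y :=
  (isOpen_compl_lattice L).is_const_of_deriv_eq_zero (isPreconnected_compl_lattice L)
    (fun z hz => (hf z hz).differentiableAt.differentiableWithinAt) (fun z hz => (hf z hz).deriv)
    hx hy

lemma deriv_logDeriv_prod_weierstrassFactor (S : Finset NonzeroIndex) {z : ℂ}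
    (hz : z ∉ L.lattice) :
    deriv (logDeriv fun y => ∏ p ∈ S, weierstrassFactor (latticePoint L p) y) z =
      ∑ p ∈ S, -(1 / (z - latticePoint L p) ^ 2 - 1 / latticePoint L p ^ 2) := by
  have hsum : (logDeriv fun y => ∏ p ∈ S, weierstrassFactor (latticePoint L p) y) =ᶠ[𝓝 z]
      fun y => ∑ p ∈ S,
        (1 / (y - latticePoint L p) + 1 / latticePoint L p + y / latticePoint L p ^ 2) := by
    filter_upwards [(isOpen_compl_lattice L).mem_nhds hz] with y hy
    rw [logDeriv_prod (fun p _ => weierstrassFactor_ne_zero (latticePoint_ne_zero L p)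
      (ne_latticePoint L hy p)) fun p _ => differentiable_weierstrassFactor _ y]
    exact Finset.sum_congr rfl fun p _ =>
      logDeriv_weierstrassFactor (latticePoint_ne_zero L p) (ne_latticePoint L hy p)
  rw [hsum.deriv_eq]
  refine (HasDerivAt.fun_sum fun p _ => ?_).deriv
  have hinv : HasDerivAt (fun y => 1 / (y - latticePoint L p))
      (-1 / (z - latticePoint L p) ^ 2) z := by
    simpa using ((hasDerivAt_id z).sub_const (latticePoint L p)).fun_inv
      (sub_ne_zero.2 (ne_latticePoint L hz p))
  refine ((hinv.add_const (1 / latticePoint L p)).add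
    ((hasDerivAt_id z).div_const (latticePoint L p ^ 2))).congr_deriv ?_
  ring

lemma hasSum_subtype_ne {ι : Type*} {f : ι → ℂ} {a : ℂ} (h : HasSum f a) (i : ι) :
    HasSum (fun j : {j // j ≠ i} => f j) (a - f i) := by
  have hi : HasSum (fun j : ({i} : Set ι) => f j) (f i) := by
    simpa using hasSum_unique fun j : ({i} : Set ι) => f j
  rw [← add_sub_cancel (f i) a] at h
  exact hi.hasSum_compl_iff.2 h

lemma hasSum_weierstrassP_sub (z : ℂ) :
    HasSum (fun p => 1 / (z - latticePoint L p) ^ 2 - 1 / latticePoint L p ^ 2)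
      (L.weierstrassP z - 1 / z ^ 2) := by
  have h := hasSum_subtype_ne
    (L.latticeEquivProd.symm.toEquiv.hasSum_iff.2 (L.hasSum_weierstrassP z)) 0
  simp only [latticePoint_eq]
  simpa using h

lemma hasDerivAt_logDeriv_sigmaProd {z : ℂ} (hz : z ∉ L.lattice) :
    HasDerivAt (logDeriv (sigmaProd L)) (1 / z ^ 2 - L.weierstrassP z) z := by
  have hU := isOpen_compl_lattice L
  have hd : ∀ S, DifferentiableOn ℂ (fun y => ∏ p ∈ S, weierstrassFactor (latticePoint L p) y)
      (L.lattice : Set ℂ)ᶜ := fun S => (differentiable_prod_weierstrassFactor L S).differentiableOn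
  have hlog := tendstoLocallyUniformlyOn_logDeriv hU
    ((tendstoLocallyUniformlyOn_sigmaProd L).mono (Set.subset_univ _)) hd
    fun y hy => sigmaProd_ne_zero L hy
  have hlogd : ∀ᶠ S in atTop, DifferentiableOn ℂ
      (logDeriv fun y => ∏ p ∈ S, weierstrassFactor (latticePoint L p) y) (L.lattice : Set ℂ)ᶜ :=
    .of_forall fun S => ((hd S).deriv hU).div (hd S) fun y hy => Finset.prod_ne_zero_iff.2
      fun p _ => weierstrassFactor_ne_zero (latticePoint_ne_zero L p) (ne_latticePoint L hy p)
  have hlim := (hlog.deriv hlogd hU).tendsto_at hz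
  have hsum : Tendsto _ atTop _ := (hasSum_weierstrassP_sub L z).neg
  have hderiv := tendsto_nhds_unique hlim <| hsum.congr fun S =>
    (deriv_logDeriv_prod_weierstrassFactor L S hz).symm
  rw [← neg_sub, ← hderiv]
  exact ((hlog.differentiableOn hlogd hU).differentiableAt (hU.mem_nhds hz)).hasDerivAt

lemma hasDerivAt_wZeta {z : ℂ} (hz : z ∉ L.lattice) :
    HasDerivAt (wZeta L.ω₁ L.ω₂) (-L.weierstrassP z) z := by
  have hne : ∀ y ∉ L.lattice, y ≠ 0 := fun y hy h => hy (h ▸ zero_mem _)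
  have hζ : wZeta L.ω₁ L.ω₂ =ᶠ[𝓝 z] fun y => y⁻¹ + logDeriv (sigmaProd L) y := by
    filter_upwards [(isOpen_compl_lattice L).mem_nhds hz] with y hy
    rw [← one_div, ← logDeriv_id]
    exact logDeriv_mul (f := id) y (hne y hy) (sigmaProd_ne_zero L hy) differentiableAt_id
      (differentiable_sigmaProd L y)
  refine (((hasDerivAt_inv (hne z hz)).add
    (hasDerivAt_logDeriv_sigmaProd L hz)).congr_of_eventuallyEq hζ).congr_deriv ?_
  ring

lemma wZeta_neg (z : ℂ) : wZeta L.ω₁ L.ω₂ (-z) = -wZeta L.ω₁ L.ω₂ z := by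
  have hderiv := deriv_comp_neg (wSigma L.ω₁ L.ω₂) z
  simp only [wSigma_neg, deriv.fun_neg, neg_inj] at hderiv
  rw [wZeta, wZeta, ← hderiv, wSigma_neg, div_neg]

variable {L} {ω : ℂ}

lemma wZeta_add (hω : ω ∈ L.lattice) (hω' : ω / 2 ∉ L.lattice) {z : ℂ} (hz : z ∉ L.lattice) :
    wZeta L.ω₁ L.ω₂ (z + ω) = wZeta L.ω₁ L.ω₂ z + 2 * wZeta L.ω₁ L.ω₂ (ω / 2) := by
  have hconst := eq_of_hasDerivAt_zero_compl_lattice L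
    (f := fun y => wZeta L.ω₁ L.ω₂ (y + ω) - wZeta L.ω₁ L.ω₂ y) (fun y hy => by
      have hy' : y + ω ∉ L.lattice := by rwa [add_mem_cancel_right hω]
      refine (((hasDerivAt_wZeta L hy').comp_add_const y ω).sub
        (hasDerivAt_wZeta L hy)).congr_deriv ?_
      rw [L.weierstrassP_add_coe y ⟨ω, hω⟩, sub_self]) hz (neg_mem_iff.not.2 hω')
  rw [wZeta_neg, show -(ω / 2) + ω = ω / 2 by ring] at hconst
  linear_combination hconst

lemma hasDerivAt_wSigma {z : ℂ} (hz : z ∉ L.lattice) :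
    HasDerivAt (wSigma L.ω₁ L.ω₂) (wZeta L.ω₁ L.ω₂ z * wSigma L.ω₁ L.ω₂ z) z := by
  rw [wZeta, div_mul_cancel₀ _ (wSigma_ne_zero L hz)]
  exact (differentiable_wSigma L z).hasDerivAt

lemma wSigma_add_of_notMem (hω : ω ∈ L.lattice) (hω' : ω / 2 ∉ L.lattice) {z : ℂ}
    (hz : z ∉ L.lattice) :
    wSigma L.ω₁ L.ω₂ (z + ω) =
      -exp (2 * wZeta L.ω₁ L.ω₂ (ω / 2) * (z + ω / 2)) * wSigma L.ω₁ L.ω₂ z := by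
  set η := 2 * wZeta L.ω₁ L.ω₂ (ω / 2) with hη
  have hconst := eq_of_hasDerivAt_zero_compl_lattice L
    (f := fun y => wSigma L.ω₁ L.ω₂ (y + ω) / wSigma L.ω₁ L.ω₂ y * exp (-(η * (y + ω / 2))))
    (fun y hy => by
      have hy' : y + ω ∉ L.lattice := by rwa [add_mem_cancel_right hω]
      have hσ := ((hasDerivAt_wSigma hy').comp_add_const y ω).div (hasDerivAt_wSigma hy)
        (wSigma_ne_zero L hy)
      have hexp := (((hasDerivAt_id y).add_const (ω / 2)).const_mul η).neg.cexp
      refine (hσ.mul hexp).congr_deriv ?_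
      have := wSigma_ne_zero L hy
      simp only [Pi.div_apply, wZeta_add hω hω' hy, ← hη, id_eq]
      generalize exp _ = e
      field_simp
      ring) hz (neg_mem_iff.not.2 hω')
  have hhalf : wSigma L.ω₁ L.ω₂ (-(ω / 2) + ω) / wSigma L.ω₁ L.ω₂ (-(ω / 2)) = -1 := by
    rw [show -(ω / 2) + ω = ω / 2 by ring, wSigma_neg, div_neg, div_self (wSigma_ne_zero L hω')]
  simp only [hhalf, neg_add_cancel, mul_zero, neg_zero, exp_zero, exp_neg] at hconst
  rw [← div_eq_mul_inv, div_div,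
    div_eq_iff (mul_ne_zero (wSigma_ne_zero L hz) (exp_ne_zero _))] at hconst
  linear_combination hconst

lemma wSigma_add (hω : ω ∈ L.lattice) (hω' : ω / 2 ∉ L.lattice) (z : ℂ) :
    wSigma L.ω₁ L.ω₂ (z + ω) =
      -exp (2 * wZeta L.ω₁ L.ω₂ (ω / 2) * (z + ω / 2)) * wSigma L.ω₁ L.ω₂ z := by
  have hcont := (differentiable_wSigma L).continuous
  refine congrFun (Continuous.ext_on ((countable_lattice L).dense_compl ℝ)
    (f := fun z => wSigma L.ω₁ L.ω₂ (z + ω))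
    (g := fun z => -exp (2 * wZeta L.ω₁ L.ω₂ (ω / 2) * (z + ω / 2)) * wSigma L.ω₁ L.ω₂ z)
    (by fun_prop) (by fun_prop) fun y hy => wSigma_add_of_notMem hω hω' hy) z

end QuasiPeriodicity

section LegendreRelation

open Complex Filter
open scoped ComplexConjugate ComplexOrder

lemma exists_eq_neg_of_notMem_slitPlane {u : ℂ} (hu : u ∉ slitPlane) :
    ∃ r : ℝ, 0 ≤ r ∧ u = -r := by
  obtain ⟨hre, him⟩ := le_def.1 (not_not.1 (mem_slitPlane_iff_not_le_zero.not.1 hu))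
  exact ⟨-u.re, by simpa using hre, ext (by simp) (by simpa using him)⟩

lemma eq_zero_of_mul_add_mul_eq_zero {ω ω' : ℂ} (hω : LinearIndependent ℝ ![ω, ω']) {s t : ℝ}
    (h : s * ω + t * ω' = 0) : s = 0 ∧ t = 0 :=
  LinearIndependent.pair_iff.1 hω s t (by simpa only [real_smul] using h)

lemma half_add_mul_ne_zero {ω ω' : ℂ} (hω : LinearIndependent ℝ ![ω, ω']) (t : ℝ) :
    ω / 2 + t * ω' ≠ 0 := fun h => by
  have := (eq_zero_of_mul_add_mul_eq_zero hω (s := 1 / 2) (t := t)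
    (by push_cast; linear_combination h)).1
  norm_num at this

lemma half_sub_div_half_add_mem_slitPlane {ω ω' : ℂ} (hω : LinearIndependent ℝ ![ω, ω']) (t : ℝ) :
    (ω / 2 - t * ω') / (ω / 2 + t * ω') ∈ slitPlane := by
  by_contra h
  obtain ⟨r, hr, hq⟩ := exists_eq_neg_of_notMem_slitPlane h
  rw [div_eq_iff (half_add_mul_ne_zero hω t)] at hq
  have := (eq_zero_of_mul_add_mul_eq_zero hω (s := (1 + r) / 2) (t := t * (r - 1))
    (by push_cast; linear_combination hq)).1
  linarith

lemma log_neg_of_im_neg {q : ℂ} (hq : q.im < 0) : log (-q) = log q + Real.pi * I := by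
  rw [log, log, norm_neg, arg_neg_eq_arg_add_pi_of_im_neg hq]
  push_cast
  ring

lemma im_sub_div_add_neg {ω ω' : ℂ} (h : 0 < (conj ω * ω').im) : ((ω - ω') / (ω + ω')).im < 0 := by
  have hne : ω + ω' ≠ 0 := by
    rintro h0
    rw [eq_neg_of_add_eq_zero_right h0] at h
    simp [mul_comm] at h
  rw [div_im, ← sub_div]
  refine div_neg_of_neg_of_pos ?_ (normSq_pos.2 hne)
  simp only [mul_im, conj_re, conj_im, sub_im, add_re, sub_re, add_im] at h ⊢
  linarith

variable (L : PeriodPair)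

/-- The closed period parallelogram centered at the origin. -/
def centeredCell : Set ℂ :=
  (fun p : ℝ × ℝ => (p.1 : ℂ) * L.ω₁ + p.2 * L.ω₂) ''
    (Set.Icc (-(1 / 2)) (1 / 2) ×ˢ Set.Icc (-(1 / 2)) (1 / 2))

/-- The branch of `log (sigmaProd L)` on the centered cell that is the sum of the principal
logarithms of the factors. -/
noncomputable def logSigmaProd (z : ℂ) : ℂ := ∑' p, logFactor (z / latticePoint L p)

lemma isCompact_centeredCell : IsCompact (centeredCell L) :=
  (isCompact_Icc.prod isCompact_Icc).image (by fun_prop)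

lemma mul_add_mul_mem_centeredCell {s t : ℝ} (hs : s ∈ Set.Icc (-(1 / 2) : ℝ) (1 / 2))
    (ht : t ∈ Set.Icc (-(1 / 2) : ℝ) (1 / 2)) : (s : ℂ) * L.ω₁ + t * L.ω₂ ∈ centeredCell L :=
  ⟨(s, t), ⟨hs, ht⟩, rfl⟩

lemma one_sub_div_latticePoint_mem_slitPlane {z : ℂ} (hz : z ∈ centeredCell L)
    (p : NonzeroIndex) : 1 - z / latticePoint L p ∈ slitPlane := by
  obtain ⟨⟨s, t⟩, ⟨hs, ht⟩, rfl⟩ := hz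
  by_contra h
  obtain ⟨r, hr, hq⟩ := exists_eq_neg_of_notMem_slitPlane h
  replace hq : (s : ℂ) * L.ω₁ + t * L.ω₂ = (1 + r) * latticePoint L p := by
    rw [← div_eq_iff (latticePoint_ne_zero L p)]
    linear_combination -hq
  have hcoord := eq_zero_of_mul_add_mul_eq_zero L.indep (s := s - (1 + r) * p.1.1)
    (t := t - (1 + r) * p.1.2) (by push_cast; rw [latticePoint] at hq; linear_combination hq)
  have hint : ∀ {m : ℤ} {x : ℝ}, x ∈ Set.Icc (-(1 / 2) : ℝ) (1 / 2) → x - (1 + r) * m = 0 →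
      m = 0 := fun {m x} hx h => by
    rw [← Int.abs_lt_one_iff, ← Int.cast_lt (R := ℝ), Int.cast_abs]
    push_cast
    calc |(m : ℝ)| ≤ (1 + r) * |(m : ℝ)| := le_mul_of_one_le_left (abs_nonneg _) (by linarith)
      _ = |x| := by rw [← abs_of_nonneg (by linarith : 0 ≤ 1 + r), ← abs_mul, sub_eq_zero.1 h]
      _ < 1 := (abs_le.2 hx).trans_lt (by norm_num)
  exact p.2 (Prod.ext (hint hs hcoord.1) (hint ht hcoord.2))

lemma hasSumUniformlyOn_logSigmaProd :
    HasSumUniformlyOn (fun p z => logFactor (z / latticePoint L p)) (logSigmaProd L)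
      (centeredCell L) := by
  obtain ⟨R, hR⟩ := (isCompact_centeredCell L).isBounded.exists_norm_le
  refine .of_norm_le_summable_eventually
    ((summable_norm_latticePoint_inv_cube L).mul_left (R ^ 3)) ?_
  filter_upwards [eventually_norm_div_latticePoint_le_half L R] with p hp z hz
  exact (logFactor_norm_le (hp z (hR z hz))).trans (norm_div_latticePoint_cube_le L p (hR z hz))

lemma continuousOn_logSigmaProd : ContinuousOn (logSigmaProd L) (centeredCell L) := by
  refine (hasSumUniformlyOn_iff_tendstoUniformlyOn.1
    (hasSumUniformlyOn_logSigmaProd L)).continuousOn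
      (Eventually.frequently (.of_forall fun S => ?_))
  refine continuousOn_finsetSum S fun p _ => ?_
  have hlin : ContinuousOn (fun z => 1 - z / latticePoint L p) (centeredCell L) := by fun_prop
  exact ((hlin.clog fun z hz => one_sub_div_latticePoint_mem_slitPlane L hz p).add
    (by fun_prop)).add (by fun_prop)

lemma exp_logSigmaProd {z : ℂ} (hz : z ∈ centeredCell L) :
    exp (logSigmaProd L z) = sigmaProd L z := by
  rw [← ((hasSumUniformlyOn_logSigmaProd L).hasSum hz).cexp.tprod_eq]
  refine tprod_congr fun p => exp_logFactor fun h => ?_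
  simpa [h] using one_sub_div_latticePoint_mem_slitPlane L hz p

lemma logSigmaProd_neg (z : ℂ) : logSigmaProd L (-z) = logSigmaProd L z := by
  rw [logSigmaProd, logSigmaProd, ← NonzeroIndex.negEquiv.tsum_eq]
  exact tsum_congr fun p => by rw [latticePoint_negEquiv, neg_div_neg_eq]

variable {L} {ω ω' : ℂ}

lemma sigmaProd_half_add (hω : ω ∈ L.lattice) (hω' : ω / 2 ∉ L.lattice) (z : ℂ) :
    (ω / 2 + z) * sigmaProd L (ω / 2 + z) =
      exp (2 * wZeta L.ω₁ L.ω₂ (ω / 2) * z) * ((ω / 2 - z) * sigmaProd L (ω / 2 - z)) := by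
  have h := wSigma_add hω hω' (-(ω / 2 - z))
  rw [wSigma_neg, wSigma_eq_mul_sigmaProd, wSigma_eq_mul_sigmaProd,
    show -(ω / 2 - z) + ω = ω / 2 + z by ring, show -(ω / 2 - z) + ω / 2 = z by ring] at h
  linear_combination h

/- The two sides have equal exponentials after replacing `ω'` by `t ω'`, are continuous in `t`, and
agree at `t = 0`. -/
lemma logSigmaProd_half_add_sub (hω : ω ∈ L.lattice) (hω' : ω / 2 ∉ L.lattice)
    (hind : LinearIndependent ℝ ![ω, ω'])
    (hcell : ∀ t ∈ Set.Icc (-(1 / 2) : ℝ) (1 / 2), ω / 2 + t * ω' ∈ centeredCell L) :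
    logSigmaProd L (ω / 2 + ω' / 2) - logSigmaProd L (ω / 2 - ω' / 2) =
      2 * wZeta L.ω₁ L.ω₂ (ω / 2) * (ω' / 2) + log ((ω / 2 - ω' / 2) / (ω / 2 + ω' / 2)) := by
  set η := 2 * wZeta L.ω₁ L.ω₂ (ω / 2)
  set I := Set.Icc (0 : ℝ) (1 / 2)
  have hadd : Set.MapsTo (fun t : ℝ => ω / 2 + t * ω') I (centeredCell L) :=
    fun t ht => hcell t ⟨by linarith [ht.1], ht.2⟩
  have hsub : Set.MapsTo (fun t : ℝ => ω / 2 - t * ω') I (centeredCell L) := fun t ht => by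
    simpa [sub_eq_add_neg] using hcell (-t) ⟨by linarith [ht.2], by linarith [ht.1]⟩
  have hlhs : ContinuousOn
      (fun t : ℝ => logSigmaProd L (ω / 2 + t * ω') - logSigmaProd L (ω / 2 - t * ω')) I :=
    ((continuousOn_logSigmaProd L).comp (by fun_prop) hadd).sub
      ((continuousOn_logSigmaProd L).comp (by fun_prop) hsub)
  have hquot : ContinuousOn (fun t : ℝ => (ω / 2 - t * ω') / (ω / 2 + t * ω')) I :=
    ContinuousOn.div (by fun_prop) (by fun_prop) fun t _ => half_add_mul_ne_zero hind t
  have hrhs : ContinuousOn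
      (fun t : ℝ => η * (t * ω') + log ((ω / 2 - t * ω') / (ω / 2 + t * ω'))) I :=
    ContinuousOn.add (by fun_prop)
      (hquot.clog fun t _ => half_sub_div_half_add_mem_slitPlane hind t)
  have heq := isCoveringMap_exp.eqOn_of_comp_eqOn isPreconnected_Icc hlhs hrhs (a := 0)
    (fun t ht => Subtype.ext ?_) (by norm_num) ?_
  · simpa [I, div_eq_inv_mul] using heq (show (1 / 2 : ℝ) ∈ I by norm_num [I])
  · have hne := exp_logSigmaProd L (hsub ht) ▸ exp_ne_zero _
    simp only [Function.comp_apply, exp_sub, exp_add, exp_logSigmaProd L (hadd ht),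
      exp_logSigmaProd L (hsub ht),
      exp_log (slitPlane_ne_zero (half_sub_div_half_add_mem_slitPlane hind t))]
    rw [div_eq_iff hne, mul_div_assoc', div_mul_eq_mul_div,
      eq_div_iff (half_add_mul_ne_zero hind t)]
    linear_combination sigmaProd_half_add hω hω' (t * ω')
  · simp [div_self (show ω / 2 ≠ 0 by simpa using half_add_mul_ne_zero hind 0)]

variable (L)

theorem legendre_relation (h : 0 < (conj L.ω₁ * L.ω₂).im) :
    2 * wZeta L.ω₁ L.ω₂ (L.ω₁ / 2) * L.ω₂ - 2 * wZeta L.ω₁ L.ω₂ (L.ω₂ / 2) * L.ω₁ =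
      2 * Real.pi * I := by
  have hhalf : (1 / 2 : ℝ) ∈ Set.Icc (-(1 / 2) : ℝ) (1 / 2) := by norm_num
  have hω₁ := logSigmaProd_half_add_sub L.ω₁_mem_lattice L.ω₁_div_two_notMem_lattice L.indep
    fun t ht => by simpa [div_eq_inv_mul] using mul_add_mul_mem_centeredCell L hhalf ht
  have hω₂ := logSigmaProd_half_add_sub L.ω₂_mem_lattice L.ω₂_div_two_notMem_lattice
    (LinearIndependent.pair_symm_iff.1 L.indep)
    fun t ht => by simpa [div_eq_inv_mul, add_comm] using mul_add_mul_mem_centeredCell L ht hhalf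
  have hq : ∀ a b : ℂ, (a / 2 - b / 2) / (a / 2 + b / 2) = (a - b) / (a + b) := fun a b => by
    rw [← sub_div, ← add_div, div_div_div_cancel_right₀ two_ne_zero]
  have hneg : logSigmaProd L (L.ω₂ / 2 - L.ω₁ / 2) = logSigmaProd L (L.ω₁ / 2 - L.ω₂ / 2) := by
    rw [← neg_sub, logSigmaProd_neg]
  rw [hq] at hω₁
  rw [hq, hneg, add_comm (L.ω₂ / 2), add_comm L.ω₂, ← neg_sub L.ω₁ L.ω₂,
    neg_div, log_neg_of_im_neg (im_sub_div_add_neg h)] at hω₂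
  linear_combination 2 * hω₂ - 2 * hω₁

end LegendreRelation

section CanonicalSection

open Complex Topology
open scoped ComplexConjugate

/-- The pointwise norm `|s(z)| exp(-|z|²)` of `s`, viewed as a section of the line bundle on the
torus whose canonical section is `σ_*`. -/
noncomputable def canonicalNorm (s : ℂ → ℂ) (z : ℂ) : ℝ := ‖s z‖ * Real.exp (-‖z‖ ^ 2)

/-- An entire function that represents a section, with a single simple zero, of a degree one line
bundle on `ℂ / L.lattice`. -/
structure IsCanonicalSection (L : PeriodPair) (s : ℂ → ℂ) : Prop where
  differentiable : Differentiable ℂ s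
  periodic_norm : ∀ ω ∈ L.lattice, Function.Periodic (canonicalNorm s) ω
  eq_zero_iff : ∀ z, s z = 0 ↔ z ∈ L.lattice
  deriv_zero_ne : deriv s 0 ≠ 0

lemma norm_add_sq_eq (z w : ℂ) :
    ‖z + w‖ ^ 2 = ‖z‖ ^ 2 + (2 * conj w * (z + w / 2)).re := by
  simp only [← normSq_eq_norm_sq, normSq_apply]
  simp only [add_re, add_im, mul_re, re_ofNat, conj_re, im_ofNat, conj_im, mul_neg, zero_mul,
    neg_zero, sub_zero, div_ofNat_re, mul_im, add_zero, div_ofNat_im, neg_mul, sub_neg_eq_add]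
  ring

lemma norm_sub_sq_eq (z w : ℂ) :
    ‖z - w‖ ^ 2 = ‖z‖ ^ 2 - (2 * conj w * z - (‖w‖ ^ 2 : ℝ)).re := by
  simp only [← normSq_eq_norm_sq, normSq_apply]
  simp only [sub_re, sub_im, ofReal_add, ofReal_mul, mul_re, re_ofNat, conj_re, im_ofNat, conj_im,
    mul_neg, zero_mul, neg_zero, sub_zero, mul_im, add_zero, neg_mul, sub_neg_eq_add, add_re,
    ofReal_re, ofReal_im, mul_zero]
  ring

lemma canonicalNorm_eq_zero {s : ℂ → ℂ} {z : ℂ} : canonicalNorm s z = 0 ↔ s z = 0 := by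
  simp [canonicalNorm]

lemma periodic_canonicalNorm {s : ℂ → ℂ} {ω : ℂ}
    (h : ∀ z, s (z + ω) = -exp (2 * conj ω * (z + ω / 2)) * s z) :
    Function.Periodic (canonicalNorm s) ω := fun z => by
  rw [canonicalNorm, canonicalNorm, h, norm_mul, norm_neg, norm_exp, norm_add_sq_eq, neg_add,
    Real.exp_add, Real.exp_neg (re _)]
  field_simp

variable (L : PeriodPair)

lemma differentiable_sigmaStar : Differentiable ℂ (sigmaStar L.ω₁ L.ω₂) :=
  Differentiable.mul (by fun_prop) (differentiable_wSigma L)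

lemma sigmaStar_zero : sigmaStar L.ω₁ L.ω₂ 0 = 0 := by
  rw [sigmaStar, wSigma_zero, mul_zero]

lemma sigmaStar_ne_zero {z : ℂ} (hz : z ∉ L.lattice) : sigmaStar L.ω₁ L.ω₂ z ≠ 0 :=
  mul_ne_zero (exp_ne_zero _) (wSigma_ne_zero L hz)

lemma deriv_sigmaStar_zero : deriv (sigmaStar L.ω₁ L.ω₂) 0 = 1 := by
  have hexp : DifferentiableAt ℂ (fun z => exp (bconst L.ω₁ L.ω₂ * z ^ 2)) 0 := by fun_prop
  refine (hexp.hasDerivAt.mul (differentiable_wSigma L 0).hasDerivAt).deriv.trans ?_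
  simp [wSigma_zero, deriv_wSigma_zero]

variable {L}

lemma sigmaStar_add {ω : ℂ} (hω : ω ∈ L.lattice) (hω' : ω / 2 ∉ L.lattice)
    (h : wZeta L.ω₁ L.ω₂ (ω / 2) + bconst L.ω₁ L.ω₂ * ω = conj ω) (z : ℂ) :
    sigmaStar L.ω₁ L.ω₂ (z + ω) =
      -exp (2 * conj ω * (z + ω / 2)) * sigmaStar L.ω₁ L.ω₂ z := by
  have hexp : exp (bconst L.ω₁ L.ω₂ * (z + ω) ^ 2) * exp (2 * wZeta L.ω₁ L.ω₂ (ω / 2) * (z + ω / 2))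
      = exp (2 * conj ω * (z + ω / 2)) * exp (bconst L.ω₁ L.ω₂ * z ^ 2) := by
    rw [← exp_add, ← exp_add, ← h]
    ring_nf
  rw [sigmaStar, sigmaStar, wSigma_add hω hω']
  linear_combination (-wSigma L.ω₁ L.ω₂ z) * hexp

lemma wZeta_half_add_bconst_mul_ω₁ (h₁ : L.ω₁ ≠ 0) (him : L.ω₁.im = 0) :
    wZeta L.ω₁ L.ω₂ (L.ω₁ / 2) + bconst L.ω₁ L.ω₂ * L.ω₁ = conj L.ω₁ := by
  rw [conj_eq_iff_im.2 him, bconst, lambda1]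
  field_simp
  ring

lemma wZeta_half_add_bconst_mul_ω₂ (h₁ : L.ω₁ ≠ 0) (him : L.ω₁.im = 0)
    (harea : L.ω₁.re * L.ω₂.im = Real.pi / 2) :
    wZeta L.ω₁ L.ω₂ (L.ω₂ / 2) + bconst L.ω₁ L.ω₂ * L.ω₂ = conj L.ω₂ := by
  have hlegendre := legendre_relation L (by simp [him, harea, Real.pi_pos])
  have harea' : L.ω₁ * (L.ω₂ - conj L.ω₂) = Real.pi * I := by
    rw [sub_conj, ← re_add_im L.ω₁, him]
    have : (L.ω₁.re * L.ω₂.im : ℂ) = Real.pi / 2 := mod_cast harea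
    push_cast
    linear_combination 2 * I * this
  rw [bconst, lambda1]
  field_simp
  linear_combination harea' - hlegendre / 2

theorem isCanonicalSection_sigmaStar (h₁ : L.ω₁ ≠ 0) (him : L.ω₁.im = 0)
    (harea : L.ω₁.re * L.ω₂.im = Real.pi / 2) :
    IsCanonicalSection L (sigmaStar L.ω₁ L.ω₂) := by
  have hper : ∀ ω ∈ L.lattice, Function.Periodic (canonicalNorm (sigmaStar L.ω₁ L.ω₂)) ω := by
    intro ω hω
    obtain ⟨m, n, rfl⟩ := PeriodPair.mem_lattice.1 hω
    have hper₁ := periodic_canonicalNorm <| sigmaStar_add L.ω₁_mem_lattice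
      L.ω₁_div_two_notMem_lattice (wZeta_half_add_bconst_mul_ω₁ h₁ him)
    have hper₂ := periodic_canonicalNorm <| sigmaStar_add L.ω₂_mem_lattice
      L.ω₂_div_two_notMem_lattice (wZeta_half_add_bconst_mul_ω₂ h₁ him harea)
    exact (hper₁.int_mul m).add_period (hper₂.int_mul n)
  refine ⟨differentiable_sigmaStar L, hper, fun z => ⟨not_imp_not.1 (sigmaStar_ne_zero L),
    fun hz => ?_⟩, deriv_sigmaStar_zero L ▸ one_ne_zero⟩
  rw [← canonicalNorm_eq_zero, ← zero_add z, hper z hz, canonicalNorm_eq_zero, sigmaStar_zero]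

variable {s : ℂ → ℂ}

lemma IsCanonicalSection.deriv_ne_zero (hs : IsCanonicalSection L s) {ω : ℂ} (hω : ω ∈ L.lattice) :
    deriv s ω ≠ 0 := by
  intro hderiv
  have hflat : (fun h => s (h + ω)) =o[𝓝 0] fun h => h := by
    simpa [hderiv, (hs.eq_zero_iff ω).2 hω, add_comm] using
      (hasDerivAt_iff_isLittleO_nhds_zero.1 (hs.differentiable ω).hasDerivAt)
  have hnorm : ∀ h, ‖s h‖ = Real.exp (‖h‖ ^ 2 - ‖h + ω‖ ^ 2) * ‖s (h + ω)‖ := fun h => by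
    have := hs.periodic_norm ω hω h
    rw [canonicalNorm, canonicalNorm, Real.exp_neg (‖h‖ ^ 2), ← div_eq_mul_inv,
      eq_div_iff (Real.exp_ne_zero _)] at this
    rw [← this, sub_eq_neg_add, Real.exp_add]
    ring
  have hcont : Continuous fun h : ℂ => Real.exp (‖h‖ ^ 2 - ‖h + ω‖ ^ 2) := by fun_prop
  have hs0 : (fun h => ‖s h‖) =o[𝓝 0] fun h => ‖h‖ := by
    simpa only [← hnorm, one_mul]
      using ((hcont.tendsto 0).isBigO_one ℝ).mul_isLittleO hflat.norm_norm
  refine hs.deriv_zero_ne (HasDerivAt.deriv (hasDerivAt_iff_isLittleO_nhds_zero.2 ?_))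
  simpa [(hs.eq_zero_iff 0).2 (zero_mem _)] using hs0.of_norm_norm

end CanonicalSection

section Torus

open ProbabilityTheory

/-- The complex torus `ℂ / L.lattice`. -/
abbrev Torus (L : PeriodPair) : Type := ℂ ⧸ L.lattice.toAddSubgroup

namespace Torus

variable (L : PeriodPair)

instance : IsClosed (L.lattice.toAddSubgroup : Set ℂ) := L.isClosed_lattice

instance : Countable L.lattice.toAddSubgroup := inferInstanceAs (Countable L.lattice)

lemma existsUnique_vadd_mem_fundamentalDomain (z : ℂ) :
    ∃! ω : L.lattice, ω +ᵥ z ∈ ZSpan.fundamentalDomain L.basis := by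
  have := ZSpan.exist_unique_vadd_mem_fundamentalDomain L.basis z
  rwa [← L.lattice_eq_span_range_basis] at this

lemma isAddFundamentalDomain (μ : Measure ℂ) :
    IsAddFundamentalDomain L.lattice.toAddSubgroup.op (ZSpan.fundamentalDomain L.basis) μ := by
  refine .mk' (ZSpan.fundamentalDomain_measurableSet _).nullMeasurableSet fun z => ?_
  refine (AddSubgroup.equivOp L.lattice.toAddSubgroup).bijective.existsUnique_iff.2 ?_
  simpa [add_comm z, Submodule.vadd_def, AddSubgroup.vadd_def]
    using! existsUnique_vadd_mem_fundamentalDomain L z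

instance : CompactSpace (Torus L) := by
  refine ⟨((ZSpan.fundamentalDomain_isBounded L.basis).isCompact_closure.image
    (QuotientAddGroup.continuous_mk (N := L.lattice.toAddSubgroup))).of_isClosed_subset
      isClosed_univ fun x _ => ?_⟩
  obtain ⟨z, rfl⟩ := QuotientAddGroup.mk_surjective x
  obtain ⟨ω, hω, -⟩ := existsUnique_vadd_mem_fundamentalDomain L z
  refine ⟨_, subset_closure hω, ?_⟩
  exact QuotientAddGroup.eq.2 (by simp [Submodule.vadd_def])

noncomputable instance : DivisibleBy (Torus L) ℤ :=
  QuotientAddGroup.mk_surjective.divisibleBy _ fun _ _ => rfl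

/-- The torus carries the Haar measure of total mass `1`. -/
noncomputable instance : MeasureSpace (Torus L) where
  volume := Measure.addHaarMeasure ⊤

instance : (volume : Measure (Torus L)).IsAddHaarMeasure :=
  inferInstanceAs (Measure.addHaarMeasure _).IsAddHaarMeasure

instance : IsProbabilityMeasure (volume : Measure (Torus L)) :=
  ⟨Measure.addHaarMeasure_self (K₀ := ⊤)⟩

theorem measurePreserving_mk :
    MeasurePreserving (QuotientAddGroup.mk : ℂ → Torus L)
      volume[|ZSpan.fundamentalDomain L.basis] := by
  set D := ZSpan.fundamentalDomain L.basis
  have hD₀ : volume D ≠ 0 := ZSpan.measure_fundamentalDomain_ne_zero L.basis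
  have hD : volume D ≠ ⊤ := (ZSpan.fundamentalDomain_isBounded L.basis).measure_lt_top.ne
  have hmk : Measurable (QuotientAddGroup.mk : ℂ → Torus L) :=
    QuotientAddGroup.continuous_mk.measurable
  refine ⟨hmk, ?_⟩
  set μ : Measure (Torus L) := (volume[|D]).map QuotientAddGroup.mk with hμ
  let ν : Measure ℂ := (volume D)⁻¹ • volume
  have : ν.IsAddHaarMeasure := .smul _ (ENNReal.inv_ne_zero.2 hD) (ENNReal.inv_ne_top.2 hD₀)
  have : IsProbabilityMeasure volume[|D] := cond_isProbabilityMeasure_of_finite hD₀ hD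
  have : IsProbabilityMeasure μ := Measure.isProbabilityMeasure_map hmk.aemeasurable
  have : HasAddFundamentalDomain L.lattice.toAddSubgroup.op ℂ ν := ⟨_, isAddFundamentalDomain L ν⟩
  have : AddQuotientMeasureEqMeasurePreimage ν μ :=
    (isAddFundamentalDomain L ν).addQuotientMeasureEqMeasurePreimage (by
      rw [hμ, ProbabilityTheory.cond, Measure.restrict_smul]; rfl)
  have : μ.IsAddHaarMeasure := AddQuotientMeasureEqMeasurePreimage.addHaarMeasure_quotient ν
  exact Measure.isAddHaarMeasure_eq_of_isProbabilityMeasure _ _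

lemma fundDomain_eq : fundDomain L.ω₁ L.ω₂ = ZSpan.fundamentalDomain L.basis := by
  ext z
  have hz : (L.basis.repr z 0 : ℂ) * L.ω₁ + (L.basis.repr z 1 : ℂ) * L.ω₂ = z := by
    simpa [Fin.sum_univ_two] using L.basis.sum_repr z
  constructor
  · rintro ⟨p, ⟨h₁, h₂⟩, rfl⟩ i
    have hp : L.basis.repr ((p.1 : ℂ) * L.ω₁ + (p.2 : ℂ) * L.ω₂) =
        p.1 • Finsupp.single 0 1 + p.2 • Finsupp.single 1 1 := by
      simp only [← L.basis_zero, ← L.basis_one, ← Complex.real_smul, map_add, map_smul,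
        Module.Basis.repr_self]
    fin_cases i <;> simpa [hp]
  · exact fun h => ⟨(L.basis.repr z 0, L.basis.repr z 1), ⟨h 0, h 1⟩, hz⟩

lemma volume_fundamentalDomain :
    volume (ZSpan.fundamentalDomain L.basis) =
      ENNReal.ofReal |L.ω₁.re * L.ω₂.im - L.ω₁.im * L.ω₂.re| := by
  have hunit : volume (parallelepiped Complex.basisOneI) = 1 := by
    simpa using Complex.orthonormalBasisOneI.volume_parallelepiped
  rw [ZSpan.measure_fundamentalDomain _ _ Complex.basisOneI,
    measure_congr (ZSpan.fundamentalDomain_ae_parallelepiped _ volume), hunit, mul_one,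
    Module.Basis.det_apply, Matrix.det_fin_two]
  simp [Module.Basis.toMatrix_apply, mul_comm]

variable {L} {α : Type*}

/-- The function on the torus induced by a periodic function on the plane. -/
def lift (f : ℂ → α) (hf : ∀ ω ∈ L.lattice, Function.Periodic f ω) : Torus L → α :=
  Quotient.lift f fun a b h => by
    simpa using (hf _ (QuotientAddGroup.leftRel_apply.1 h) a).symm

variable {f : ℂ → α} (hf : ∀ ω ∈ L.lattice, Function.Periodic f ω)

lemma continuous_lift [TopologicalSpace α] (h : Continuous f) : Continuous (lift f hf) :=
  h.quotient_lift _

end Torus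

lemma exists_norm_le_of_periodic {L : PeriodPair} {f : ℂ → ℝ} (hcont : Continuous f)
    (hf : ∀ ω ∈ L.lattice, Function.Periodic f ω) : ∃ C, ∀ z, ‖f z‖ ≤ C := by
  obtain ⟨C, hC⟩ := isCompact_univ.exists_bound_of_continuousOn
    (Torus.continuous_lift hf hcont).continuousOn
  exact ⟨C, fun z => hC z (Set.mem_univ _)⟩

end Torus

section GridIdentity

open Complex Topology
open scoped ComplexConjugate

lemma differentiable_dslope {f : ℂ → ℂ} (hf : Differentiable ℂ f) (u : ℂ) :
    Differentiable ℂ (dslope f u) := by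
  rw [← differentiableOn_univ] at hf ⊢
  exact (Complex.differentiableOn_dslope Filter.univ_mem).2 hf

lemma exists_differentiable_mul_eq {f g : ℂ → ℂ} (hf : Differentiable ℂ f)
    (hg : Differentiable ℂ g) (hsimple : ∀ z, g z = 0 → deriv g z ≠ 0)
    (hzero : ∀ z, g z = 0 → f z = 0) : ∃ k, Differentiable ℂ k ∧ f = k * g := by
  classical
  refine ⟨fun z => if g z = 0 then deriv f z / deriv g z else f z / g z, fun u => ?_, ?_⟩
  · by_cases hu : g u = 0
    · have hne : ∀ᶠ z in 𝓝 u, dslope g u z ≠ 0 :=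
        (differentiable_dslope hg u).continuous.continuousAt.eventually_ne
          (by rw [dslope_same]; exact hsimple u hu)
      refine ((differentiable_dslope hf u u).div (differentiable_dslope hg u u)
        hne.self_of_nhds).congr_of_eventuallyEq (hne.mono fun z hz => ?_)
      obtain rfl | hzu := eq_or_ne z u
      · simp [hu]
      · have hfz := sub_smul_dslope f u z
        have hgz := sub_smul_dslope g u z
        rw [hzero u hu, sub_zero, smul_eq_mul] at hfz
        rw [hu, sub_zero, smul_eq_mul] at hgz
        have hgz₀ : g z ≠ 0 := hgz ▸ mul_ne_zero (sub_ne_zero.2 hzu) hz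
        simp only [if_neg hgz₀, Pi.div_apply]
        rw [← hfz, ← hgz, mul_div_mul_left _ _ (sub_ne_zero.2 hzu)]
    · refine ((hf u).div (hg u) hu).congr_of_eventuallyEq ?_
      filter_upwards [hg.continuous.continuousAt.eventually_ne hu] with z hz
      simp [hz]
  · funext z
    by_cases hz : g z = 0 <;> simp [hz, hzero z]

lemma dense_ne_zero {g : ℂ → ℂ} (hg : Differentiable ℂ g)
    (hsimple : ∀ z, g z = 0 → deriv g z ≠ 0) : Dense {z | g z ≠ 0} := fun u => by
  by_cases hu : g u = 0
  · have hne := (hg u).hasDerivAt.eventually_ne (c := 0) (hsimple u hu)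
    exact mem_closure_iff_frequently.2 (hne.frequently.filter_mono nhdsWithin_le_nhds)
  · exact subset_closure hu

theorem exists_eq_const_mul_of_periodic {L : PeriodPair} {f g : ℂ → ℂ} {w : ℂ → ℝ}
    (hf : Differentiable ℂ f) (hg : Differentiable ℂ g) (hw : ∀ z, w z ≠ 0)
    (hfper : ∀ ω ∈ L.lattice, Function.Periodic (fun z => ‖f z‖ * w z) ω)
    (hgper : ∀ ω ∈ L.lattice, Function.Periodic (fun z => ‖g z‖ * w z) ω)
    (hsimple : ∀ z, g z = 0 → deriv g z ≠ 0) (hzero : ∀ z, g z = 0 → f z = 0) :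
    ∃ c, ∀ z, f z = c * g z := by
  obtain ⟨k, hk, rfl⟩ := exists_differentiable_mul_eq hf hg hsimple hzero
  have hkper : ∀ ω ∈ L.lattice, Function.Periodic (fun z => ‖k z‖) ω := fun ω hω => by
    refine congrFun <| (hk.continuous.norm.comp (continuous_add_const ω)).ext_on
      (dense_ne_zero hg hsimple) hk.continuous.norm fun z hz => ?_
    have hprod := hfper ω hω z
    simp only [Pi.mul_apply, norm_mul, mul_assoc, ← hgper ω hω z] at hprod
    refine mul_right_cancel₀ ?_ hprod
    simpa only [hgper ω hω z] using mul_ne_zero (norm_ne_zero_iff.2 hz) (hw z)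
  obtain ⟨C, hC⟩ := exists_norm_le_of_periodic hk.continuous.norm hkper
  have hbdd : Bornology.IsBounded (Set.range k) :=
    isBounded_iff_forall_norm_le.2 ⟨C, by simpa using hC⟩
  exact ⟨k 0, fun z => by rw [Pi.mul_apply, hk.apply_eq_apply_of_bounded hbdd z 0]⟩

/-- The translate of `s` by `w`, multiplied by the exponential factor that turns it into a section
with the same weight `exp(-|z|²)`. -/
noncomputable def twistedTranslate (s : ℂ → ℂ) (w z : ℂ) : ℂ :=
  exp (2 * conj w * z - (‖w‖ ^ 2 : ℝ)) * s (z - w)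

lemma canonicalNorm_twistedTranslate (s : ℂ → ℂ) (w z : ℂ) :
    canonicalNorm (twistedTranslate s w) z = canonicalNorm s (z - w) := by
  rw [canonicalNorm, canonicalNorm, twistedTranslate, norm_mul, norm_exp, norm_sub_sq_eq, neg_sub,
    sub_eq_add_neg _ (‖z‖ ^ 2), Real.exp_add]
  ring

/-- The `n ^ 2` representatives of the `n`-torsion points of `ℂ / L.lattice` in the fundamental
parallelogram. -/
noncomputable def torsionPoint (L : PeriodPair) {n : ℕ} (j : Fin n × Fin n) : ℂ :=
  ((j.1 : ℕ) * L.ω₁ + (j.2 : ℕ) * L.ω₂) / n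

lemma mul_sub_torsionPoint_mem_iff {L : PeriodPair} {n : ℕ} (hn : n ≠ 0) (j : Fin n × Fin n)
    (z : ℂ) : n * (z - torsionPoint L j) ∈ L.lattice ↔ n * z ∈ L.lattice := by
  have hj : n * torsionPoint L j ∈ L.lattice := by
    rw [torsionPoint, mul_div_cancel₀ _ (Nat.cast_ne_zero.2 hn)]
    exact PeriodPair.mem_lattice.2 ⟨(j.1 : ℕ), (j.2 : ℕ), by push_cast; rfl⟩
  rw [mul_sub, Submodule.sub_mem_iff_left _ hj]

lemma exists_sub_torsionPoint_mem {L : PeriodPair} {n : ℕ} (hn : n ≠ 0) {z : ℂ}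
    (hz : n * z ∈ L.lattice) : ∃ j : Fin n × Fin n, z - torsionPoint L j ∈ L.lattice := by
  obtain ⟨a, b, hab⟩ := PeriodPair.mem_lattice.1 hz
  have hdiv : ∀ a : ℤ, ∃ (q : ℤ) (r : Fin n), (a : ℂ) = n * q + (r : ℕ) := fun a => by
    have hn' : (0 : ℤ) < n := by positivity
    refine ⟨a / n, ⟨(a % n).toNat, by have := Int.emod_lt_of_pos a hn'; omega⟩, ?_⟩
    rw [← Int.cast_natCast (Int.toNat _), Int.toNat_of_nonneg (Int.emod_nonneg a hn'.ne')]
    exact_mod_cast (Int.mul_ediv_add_emod a n).symm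
  obtain ⟨q₁, r₁, h₁⟩ := hdiv a
  obtain ⟨q₂, r₂, h₂⟩ := hdiv b
  refine ⟨(r₁, r₂), PeriodPair.mem_lattice.2 ⟨q₁, q₂, ?_⟩⟩
  have hn' : (n : ℂ) ≠ 0 := Nat.cast_ne_zero.2 hn
  rw [torsionPoint, eq_sub_iff_add_eq]
  apply mul_left_cancel₀ hn'
  rw [← hab, h₁, h₂]
  field_simp
  ring

variable {L : PeriodPair} {s : ℂ → ℂ}

lemma norm_prod_twistedTranslate {n : ℕ} (z : ℂ) :
    ‖∏ j : Fin n × Fin n, twistedTranslate s (torsionPoint L j) z‖ * Real.exp (-‖n * z‖ ^ 2) =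
      ∏ j : Fin n × Fin n, canonicalNorm s (z - torsionPoint L j) := by
  have hexp : Real.exp (-‖n * z‖ ^ 2) = ∏ _j : Fin n × Fin n, Real.exp (-‖z‖ ^ 2) := by
    simp only [Finset.prod_const, Finset.card_univ, Fintype.card_prod, Fintype.card_fin,
      ← Real.exp_nat_mul, norm_mul, norm_natCast]
    push_cast
    ring_nf
  simp only [hexp, norm_prod, ← Finset.prod_mul_distrib, ← canonicalNorm_twistedTranslate]
  rfl

lemma differentiable_twistedTranslate (hs : Differentiable ℂ s) (w : ℂ) :
    Differentiable ℂ (twistedTranslate s w) := by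
  unfold twistedTranslate
  fun_prop

lemma IsCanonicalSection.exists_prod_canonicalNorm_eq (hs : IsCanonicalSection L s)
    {n : ℕ} (hn : n ≠ 0) : ∃ C, ∀ z,
      ∏ j : Fin n × Fin n, canonicalNorm s (z - torsionPoint L j) =
        C * canonicalNorm s (n * z) := by
  set P : ℂ → ℂ := fun z => ∏ j : Fin n × Fin n, twistedTranslate s (torsionPoint L j) z
  have hP : Differentiable ℂ P :=
    .fun_finsetProd fun _ _ => differentiable_twistedTranslate hs.differentiable _
  have hPper : ∀ ω ∈ L.lattice, Function.Periodic (fun z => ‖P z‖ * Real.exp (-‖n * z‖ ^ 2)) ω :=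
    fun ω hω z => by
      simp only [P, norm_prod_twistedTranslate, add_sub_right_comm, hs.periodic_norm ω hω _]
  have hper : ∀ ω ∈ L.lattice,
      Function.Periodic (fun z => ‖s (n * z)‖ * Real.exp (-‖n * z‖ ^ 2)) ω := fun ω hω z => by
    have hnω : n * ω ∈ L.lattice := by simpa using nsmul_mem hω n
    simpa only [mul_add, canonicalNorm] using hs.periodic_norm _ hnω (n * z)
  have hsimple : ∀ z, s (n * z) = 0 → deriv (fun z => s (n * z)) z ≠ 0 := fun z hz => by
    rw [deriv_comp_mul_left]
    simpa [hn] using hs.deriv_ne_zero ((hs.eq_zero_iff _).1 hz)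
  have hzero : ∀ z, s (n * z) = 0 → P z = 0 := fun z hz => by
    obtain ⟨j, hj⟩ := exists_sub_torsionPoint_mem hn ((hs.eq_zero_iff _).1 hz)
    exact Finset.prod_eq_zero (Finset.mem_univ j)
      (by rw [twistedTranslate, (hs.eq_zero_iff _).2 hj, mul_zero])
  obtain ⟨c, hc⟩ := exists_eq_const_mul_of_periodic hP (hs.differentiable.comp (by fun_prop))
    (fun z => Real.exp_ne_zero (-‖n * z‖ ^ 2)) hPper hper hsimple hzero
  refine ⟨‖c‖, fun z => ?_⟩
  rw [← norm_prod_twistedTranslate, show ∏ j, _ = _ from hc z, norm_mul, mul_assoc]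
  rfl

lemma exists_natCast_mul_notMem_lattice (L : PeriodPair) {n : ℕ} (hn : n ≠ 0) :
    ∃ z : ℂ, n * z ∉ L.lattice :=
  ⟨L.ω₁ / 2 / n, by
    rw [mul_div_cancel₀ _ (Nat.cast_ne_zero.2 hn)]
    exact L.ω₁_div_two_notMem_lattice⟩

theorem IsCanonicalSection.exists_ne_zero_prod_canonicalNorm_eq (hs : IsCanonicalSection L s)
    {n : ℕ} (hn : n ≠ 0) : ∃ C ≠ 0, ∀ z,
      ∏ j : Fin n × Fin n, canonicalNorm s (z - torsionPoint L j) =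
        C * canonicalNorm s (n * z) := by
  obtain ⟨C, hC⟩ := hs.exists_prod_canonicalNorm_eq hn
  obtain ⟨z, hz⟩ := exists_natCast_mul_notMem_lattice L hn
  refine ⟨C, left_ne_zero_of_mul (b := canonicalNorm s (n * z)) ?_, hC⟩
  rw [← hC, Finset.prod_ne_zero_iff]
  exact fun j _ h => hz <| (mul_sub_torsionPoint_mem_iff hn j z).1 <| by
    simpa using nsmul_mem ((hs.eq_zero_iff _).1 (canonicalNorm_eq_zero.1 h)) n

end GridIdentity

section LogIntegrability

open Filter Topology

lemma locallyIntegrable_log_norm {E : Type*} [NormedAddCommGroup E] [NormedSpace ℝ E]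
    [FiniteDimensional ℝ E] [Nontrivial E] [MeasurableSpace E] [BorelSpace E] (μ : Measure E)
    [μ.IsAddHaarMeasure] : LocallyIntegrable (fun z : E => Real.log ‖z‖) μ := by
  refine locallyIntegrable_iff.2 fun K hK => ?_
  obtain ⟨R, hR⟩ := hK.isBounded.subset_ball 0
  refine IntegrableOn.mono_set ?_ hR
  rw [integrableOn_fun_norm_addHaar]
  refine IntegrableOn.mono_set ?_ Set.Ioo_subset_Ioc_self
  exact (intervalIntegral.intervalIntegrable_log'.continuousOn_mul
    (by fun_prop : ContinuousOn _ _)).1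

lemma integrableAtFilter_congr_of_eventuallyEq_nhdsNE {X E : Type*} [TopologicalSpace X]
    [MeasurableSpace X] [OpensMeasurableSpace X] [T1Space X] [NormedAddCommGroup E]
    {μ : Measure X} [NullSingletonClass μ] {f g : X → E} {x : X} (hf : IntegrableAtFilter f (𝓝 x) μ)
    (hfg : f =ᶠ[𝓝[≠] x] g) : IntegrableAtFilter g (𝓝 x) μ := by
  have := (measurableSet_singleton x).compl.nhdsWithin_isMeasurablyGenerated x
  obtain ⟨s, hs, hfs⟩ := hf
  obtain ⟨t, ht, htmeas, hfgt⟩ := hfg.exists_measurable_mem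
  have hle : 𝓝 x ⊓ ae μ ≤ 𝓝[≠] x :=
    inf_le_inf_left _ (le_principal_iff.2 (compl_mem_ae_iff.2 (measure_singleton x)))
  refine .of_inf_ae (.filter_mono hle
    ⟨s ∩ t, inter_mem (mem_nhdsWithin_of_mem_nhds hs) ht, ?_⟩)
  exact (hfs.mono_set Set.inter_subset_left).congr_fun_ae
    (ae_restrict_of_ae_restrict_of_subset Set.inter_subset_right
      (ae_restrict_of_forall_mem htmeas hfgt))

variable {f : ℂ → ℂ} {u : ℂ}

lemma integrableAtFilter_log_norm_of_analyticAt (hf : AnalyticAt ℂ f u) (hu : f u ≠ 0) :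
    IntegrableAtFilter (fun z => Real.log ‖f z‖) (𝓝 u) := by
  obtain ⟨U, hU, hopen, hmem⟩ := eventually_nhds_iff.1
    (hf.eventually_analyticAt.and (hf.continuousAt.eventually_ne hu))
  have hcont : ContinuousOn (fun z => Real.log ‖f z‖) U := fun z hz =>
    ((hU z hz).1.continuousAt.norm.log (norm_ne_zero_iff.2 (hU z hz).2)).continuousWithinAt
  simpa only [hopen.nhdsWithin_eq hmem] using
    hcont.integrableAt_nhdsWithin hopen.measurableSet hmem

theorem integrableAtFilter_log_norm_of_meromorphicAt (hf : MeromorphicAt f u) :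
    IntegrableAtFilter (fun z => Real.log ‖f z‖) (𝓝 u) := by
  by_cases htop : meromorphicOrderAt f u = ⊤
  · refine integrableAtFilter_congr_of_eventuallyEq_nhdsNE integrableAtFilter_zero ?_
    filter_upwards [meromorphicOrderAt_eq_top_iff.1 htop] with z hz
    simp [hz]
  · obtain ⟨g, hg, hgu, hfg⟩ := (meromorphicOrderAt_ne_top_iff hf).1 htop
    set n : ℤ := (meromorphicOrderAt f u).untop₀
    have hlog : IntegrableAtFilter (fun z => Real.log ‖z - u‖) (𝓝 u) := by
      obtain ⟨s, hs, hint⟩ := locallyIntegrable_log_norm (volume : Measure ℂ) 0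
      refine ⟨(fun z => z - u) ⁻¹' s, (continuous_sub_right u).continuousAt.preimage_mem_nhds
        (by simpa using hs), ?_⟩
      exact ((measurePreserving_sub_right volume u).integrableOn_comp_preimage
        (MeasurableEquiv.subRight u).measurableEmbedding).2 hint
    refine integrableAtFilter_congr_of_eventuallyEq_nhdsNE
      ((hlog.smul (n : ℝ)).add (integrableAtFilter_log_norm_of_analyticAt hg hgu)) ?_
    filter_upwards [hfg, self_mem_nhdsWithin,
      (hg.continuousAt.eventually_ne hgu).filter_mono nhdsWithin_le_nhds] with z hz hzu hgz
    have hzu' : ‖z - u‖ ^ n ≠ 0 := zpow_ne_zero _ (norm_ne_zero_iff.2 (sub_ne_zero.2 hzu))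
    rw [hz, norm_smul, norm_zpow, Real.log_mul hzu' (norm_ne_zero_iff.2 hgz), Real.log_zpow]
    rfl

lemma locallyIntegrable_log_norm_of_differentiable (hf : Differentiable ℂ f) :
    LocallyIntegrable fun z => Real.log ‖f z‖ := fun u =>
  integrableAtFilter_log_norm_of_meromorphicAt (hf.analyticAt u).meromorphicAt

end LogIntegrability

section Potential

variable {L : PeriodPair} {s : ℂ → ℂ}

/-- The function on the torus induced by `log |s(z)| - |z|²`; it takes the junk value `0` at the
zero of the section. -/
noncomputable def IsCanonicalSection.potential (hs : IsCanonicalSection L s) (x : Torus L) : ℝ :=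
  Real.log (Torus.lift (canonicalNorm s) hs.periodic_norm x)

namespace IsCanonicalSection

variable (hs : IsCanonicalSection L s)
include hs

lemma potential_mk (z : ℂ) : hs.potential z = Real.log (canonicalNorm s z) := rfl

lemma continuous_canonicalNorm : Continuous (canonicalNorm s) := by
  have := hs.differentiable.continuous
  unfold canonicalNorm
  fun_prop

lemma measurable_potential : Measurable hs.potential :=
  Real.measurable_log.comp
    (Torus.continuous_lift hs.periodic_norm hs.continuous_canonicalNorm).measurable

lemma exists_potential_le : ∃ M, ∀ x, hs.potential x ≤ M := by
  obtain ⟨C, hC⟩ := exists_norm_le_of_periodic hs.continuous_canonicalNorm hs.periodic_norm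
  refine ⟨C, fun x => ?_⟩
  obtain ⟨z, rfl⟩ := QuotientAddGroup.mk_surjective x
  have hnonneg : 0 ≤ canonicalNorm s z := by unfold canonicalNorm; positivity
  exact (Real.log_le_self hnonneg).trans ((le_abs_self _).trans (hC z))

lemma log_canonicalNorm {z : ℂ} (hz : z ∉ L.lattice) :
    Real.log (canonicalNorm s z) = Real.log ‖s z‖ - ‖z‖ ^ 2 := by
  rw [canonicalNorm, Real.log_mul (norm_ne_zero_iff.2 (mt (hs.eq_zero_iff z).1 hz))
    (Real.exp_ne_zero _), Real.log_exp, sub_eq_add_neg]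

lemma ae_potential_mk_sub_eq (w : ℂ) :
    ∀ᵐ z : ℂ, hs.potential ((z - w : ℂ) : Torus L) = Real.log ‖s (z - w)‖ - ‖z - w‖ ^ 2 := by
  have hnot : ∀ᵐ z : ℂ, z - w ∉ L.lattice :=
    (measurePreserving_sub_right volume w).quasiMeasurePreserving.ae
      ((countable_lattice L).ae_notMem volume)
  filter_upwards [hnot] with z hz using hs.log_canonicalNorm hz

lemma ae_potential_mk_eq :
    ∀ᵐ z : ℂ, hs.potential (z : Torus L) = Real.log ‖s z‖ - ‖z‖ ^ 2 := by
  simpa only [sub_zero] using hs.ae_potential_mk_sub_eq 0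

theorem integrable_potential : Integrable hs.potential := by
  have hlog : LocallyIntegrable fun z => Real.log ‖s z‖ - ‖z‖ ^ 2 :=
    (locallyIntegrable_log_norm_of_differentiable hs.differentiable).sub
      (by fun_prop : Continuous _).locallyIntegrable
  have hmk := Torus.measurePreserving_mk L
  rw [← hmk.integrable_comp hs.measurable_potential.aestronglyMeasurable]
  refine Integrable.smul_measure (Integrable.congr ?_ (ae_restrict_of_ae
    (hs.ae_potential_mk_eq.mono fun z => Eq.symm))) ?_
  · exact (hlog.integrableOn_isCompact
      (ZSpan.fundamentalDomain_isBounded L.basis).isCompact_closure).mono_set subset_closure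
  · exact ENNReal.inv_ne_top.2 (ZSpan.measure_fundamentalDomain_ne_zero L.basis)

end IsCanonicalSection

end Potential

section BalancedTranslates

variable {G ι κ : Type*} [AddGroup G] [MeasurableSpace G] [Fintype ι] [Fintype κ]
  {μ : Measure G} {v : G → ℝ} {M B C β : ℝ}

/-- The mean of `exp` of the sum of the translates by `w` of the centered function
`β (v - ∫ v)`. -/
noncomputable def packingIntegral (μ : Measure G) (v : G → ℝ) (β : ℝ) (w : ι → G) : ℝ :=
  ∫ x, Real.exp (∑ j, β * (v (x - w j) - ∫ y, v y ∂μ)) ∂μ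

/-- There are translates of the centered function `v - ∫ v`, one for each element of `ι`, whose sum
is almost everywhere at most `B`. -/
def HasBalancedTranslates (μ : Measure G) (v : G → ℝ) (ι : Type*) [Fintype ι] (B : ℝ) : Prop :=
  ∃ w : ι → G, ∀ᵐ x ∂μ, ∑ j, (v (x - w j) - ∫ y, v y ∂μ) ≤ B

namespace HasBalancedTranslates

lemma of_isEmpty [IsEmpty ι] (hB : 0 ≤ B) : HasBalancedTranslates μ v ι B :=
  ⟨isEmptyElim, by simpa using .of_forall fun _ => hB⟩

lemma congr_equiv (h : HasBalancedTranslates μ v ι B) (e : κ ≃ ι) :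
    HasBalancedTranslates μ v κ B := by
  obtain ⟨w, hw⟩ := h
  refine ⟨w ∘ e, ?_⟩
  filter_upwards [hw] with x hx
  rwa [← e.sum_comp] at hx

lemma sum (h : HasBalancedTranslates μ v ι B) (h' : HasBalancedTranslates μ v κ C) :
    HasBalancedTranslates μ v (ι ⊕ κ) (B + C) := by
  obtain ⟨w, hw⟩ := h
  obtain ⟨w', hw'⟩ := h'
  refine ⟨Sum.elim w w', ?_⟩
  filter_upwards [hw, hw'] with x hx hx'
  simpa only [Fintype.sum_sum_type, Sum.elim_inl, Sum.elim_inr] using add_le_add hx hx'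

end HasBalancedTranslates

variable [MeasurableAdd G] [μ.IsAddRightInvariant]

lemma integral_sum_comp_sub_right (hv : Integrable v μ) (w : ι → G) :
    ∫ x, ∑ j, v (x - w j) ∂μ = Fintype.card ι * ∫ x, v x ∂μ := by
  rw [integral_finsetSum _ fun j _ => hv.comp_sub_right (w j)]
  simp only [integral_sub_right_eq_self, Finset.sum_const, Finset.card_univ, nsmul_eq_mul]

lemma integrable_exp_sum [IsFiniteMeasure μ] (hv : Integrable v μ) (hM : ∀ x, v x ≤ M) (hβ : 0 ≤ β)
    (w : ι → G) (c : ℝ) : Integrable (fun x => Real.exp (∑ j, β * (v (x - w j) - c))) μ := by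
  have hmeas : AEStronglyMeasurable (fun x => ∑ j, β * (v (x - w j) - c)) μ :=
    Finset.aestronglyMeasurable_fun_sum _ fun j _ =>
      (((hv.comp_sub_right (w j)).sub (integrable_const c)).const_mul β).aestronglyMeasurable
  refine .of_bound (Real.continuous_exp.comp_aestronglyMeasurable hmeas)
    (Real.exp (∑ _j : ι, β * (M - c))) (.of_forall fun x => ?_)
  rw [Real.norm_eq_abs, Real.abs_exp]
  gcongr
  exact hM _

variable [IsProbabilityMeasure μ]

theorem HasBalancedTranslates.of_ae_sum_eq (hv : Integrable v μ) (hM : ∀ x, v x ≤ M) {φ : G → G}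
    (hφ : MeasurePreserving φ μ μ) {w : ι → G} {c : ℝ}
    (h : ∀ᵐ x ∂μ, ∑ j, v (x - w j) = c + v (φ x)) :
    HasBalancedTranslates μ v ι (M - ∫ x, v x ∂μ) := by
  have hmean : Fintype.card ι * ∫ x, v x ∂μ = c + ∫ x, v x ∂μ := by
    have hφv : Integrable (fun x => v (φ x)) μ := hφ.integrable_comp_of_integrable hv
    have hint : ∫ x, v (φ x) ∂μ = ∫ x, v x ∂μ := by
      rw [← integral_map hφ.aemeasurable (by rw [hφ.map_eq]; exact hv.aestronglyMeasurable),
        hφ.map_eq]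
    rw [← integral_sum_comp_sub_right hv w, integral_congr_ae h,
      integral_add (integrable_const c) hφv, hint]
    simp
  refine ⟨w, ?_⟩
  filter_upwards [h] with x hx
  simp only [Finset.sum_sub_distrib, hx, Finset.sum_const, Finset.card_univ, nsmul_eq_mul, hmean]
  linarith [hM (φ x)]

theorem one_le_packingIntegral (hv : Integrable v μ) (hM : ∀ x, v x ≤ M) (hβ : 0 ≤ β)
    (w : ι → G) : 1 ≤ packingIntegral μ v β w := by
  set m := ∫ x, v x ∂μ with hm
  have hu : Integrable (fun x => β * (v x - m)) μ := (hv.sub (integrable_const m)).const_mul β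
  have hint : Integrable (fun x => ∑ j, β * (v (x - w j) - m)) μ :=
    integrable_finsetSum _ fun j _ => hu.comp_sub_right (w j)
  have hzero : ∫ x, ∑ j, β * (v (x - w j) - m) ∂μ = 0 := by
    rw [integral_sum_comp_sub_right hu, integral_const_mul, integral_sub hv (integrable_const m)]
    simp [hm]
  calc (1 : ℝ) = ∫ x, (∑ j, β * (v (x - w j) - m) + 1) ∂μ := by
        rw [integral_add hint (integrable_const 1), hzero]
        simp
    _ ≤ packingIntegral μ v β w :=
        integral_mono (hint.add (integrable_const 1)) (integrable_exp_sum hv hM hβ w m)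
          fun x => Real.add_one_le_exp _

theorem HasBalancedTranslates.exists_packingIntegral_le (h : HasBalancedTranslates μ v ι B)
    (hv : Integrable v μ) (hM : ∀ x, v x ≤ M) (hβ : 0 ≤ β) :
    ∃ w : ι → G, packingIntegral μ v β w ≤ Real.exp B ^ β := by
  obtain ⟨w, hw⟩ := h
  refine ⟨w, ?_⟩
  calc packingIntegral μ v β w ≤ ∫ _, Real.exp (B * β) ∂μ := by
        refine integral_mono_ae (integrable_exp_sum hv hM hβ w _) (integrable_const _) ?_
        filter_upwards [hw] with x hx
        rw [← Finset.mul_sum, mul_comm B]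
        gcongr
    _ = Real.exp B ^ β := by simp [Real.exp_mul]

end BalancedTranslates

section TorusPacking

open ProbabilityTheory

namespace Torus

variable (L : PeriodPair)

lemma ae_ne_zero : ∀ᵐ x : Torus L, x ≠ 0 := by
  have hmk := measurePreserving_mk L
  rw [ae_iff]
  simp only [ne_eq, not_not, Set.ofPred_eq_eq_singleton]
  rw [← hmk.measure_preimage (measurableSet_singleton 0).nullMeasurableSet]
  refine cond_absolutelyContinuous ?_
  have : QuotientAddGroup.mk ⁻¹' {(0 : Torus L)} = (L.lattice : Set ℂ) := by
    ext z
    simp [QuotientAddGroup.eq_zero_iff]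
  rw [this]
  exact (countable_lattice L).measure_zero volume

variable {L}

lemma integral_eq_mul_setIntegral_fundDomain {f : Torus L → ℝ} (hf : AEStronglyMeasurable f) :
    ∫ x, f x = |L.ω₁.re * L.ω₂.im - L.ω₁.im * L.ω₂.re|⁻¹ *
      ∫ z in fundDomain L.ω₁ L.ω₂, f (z : Torus L) := by
  have hmk := measurePreserving_mk L
  rw [← hmk.map_eq] at hf
  rw [← hmk.map_eq, integral_map hmk.aemeasurable hf, ProbabilityTheory.cond,
    integral_smul_measure, fundDomain_eq, volume_fundamentalDomain, ENNReal.toReal_inv,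
    ENNReal.toReal_ofReal (abs_nonneg _), smul_eq_mul]

end Torus

variable {L : PeriodPair} {s : ℂ → ℂ}

namespace IsCanonicalSection

variable (hs : IsCanonicalSection L s) {n : ℕ}
include hs

lemma exists_sum_potential_sub_torsionPoint_eq (hn : n ≠ 0) : ∃ c : ℝ, ∀ x : Torus L,
    (n : ℤ) • x ≠ 0 → ∑ j : Fin n × Fin n, hs.potential (x - torsionPoint L j) =
      c + hs.potential ((n : ℤ) • x) := by
  obtain ⟨C, hC, hprod⟩ := hs.exists_ne_zero_prod_canonicalNorm_eq hn
  refine ⟨Real.log C, fun x hx => ?_⟩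
  obtain ⟨z, rfl⟩ := QuotientAddGroup.mk_surjective x
  have hsmul : (n : ℤ) • (z : Torus L) = ((n * z : ℂ) : Torus L) := by
    rw [← QuotientAddGroup.mk_zsmul]
    simp
  have hne : canonicalNorm s (n * z) ≠ 0 := by
    rw [hsmul, Ne, QuotientAddGroup.eq_zero_iff] at hx
    rwa [Ne, canonicalNorm_eq_zero, hs.eq_zero_iff]
  have hfactor := Finset.prod_ne_zero_iff.1 (hprod z ▸ mul_ne_zero hC hne)
  rw [hsmul, potential_mk, ← Real.log_mul hC hne, ← hprod z, Real.log_prod hfactor]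
  rfl

theorem hasBalancedTranslates_prod_fin {M : ℝ} (hM : ∀ x, hs.potential x ≤ M) (n : ℕ) :
    HasBalancedTranslates volume hs.potential (Fin n × Fin n) (M - ∫ x, hs.potential x) := by
  obtain rfl | hn := eq_or_ne n 0
  · refine .of_isEmpty (sub_nonneg.2 ?_)
    simpa using integral_mono hs.integrable_potential (integrable_const M) hM
  · obtain ⟨c, hc⟩ := hs.exists_sum_potential_sub_torsionPoint_eq hn
    have hφ := Measure.measurePreserving_zsmul (volume : Measure (Torus L))
      (Int.natCast_ne_zero.2 hn)
    exact .of_ae_sum_eq hs.integrable_potential hM hφ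
      ((hφ.quasiMeasurePreserving.ae (Torus.ae_ne_zero L)).mono hc)

theorem exists_hasBalancedTranslates_fin :
    ∃ B > 0, ∀ N, HasBalancedTranslates volume hs.potential (Fin N) B := by
  obtain ⟨M, hM⟩ := hs.exists_potential_le
  have hM' : ∀ x, hs.potential x ≤ M + 1 := fun x => (hM x).trans (by linarith)
  have hmean : ∫ x, hs.potential x ≤ M := by
    simpa using integral_mono hs.integrable_potential (integrable_const M) hM
  set B := M + 1 - ∫ x, hs.potential x
  refine ⟨B + B + (B + B), by simp only [B]; linarith, fun N => ?_⟩
  obtain ⟨a, b, c, d, rfl⟩ := Nat.sum_four_squares N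
  have hsq := hs.hasBalancedTranslates_prod_fin hM'
  refine (((hsq a).sum (hsq b)).sum ((hsq c).sum (hsq d))).congr_equiv
    (Fintype.equivFinOfCardEq ?_).symm
  simp only [Fintype.card_sum, Fintype.card_prod, Fintype.card_fin]
  ring

end IsCanonicalSection

lemma linearIndependent_pair_of_det_ne_zero {z w : ℂ} (h : z.re * w.im - z.im * w.re ≠ 0) :
    LinearIndependent ℝ ![z, w] := by
  refine LinearIndependent.pair_iff.2 fun a b hab => ?_
  have hre : a * z.re + b * w.re = 0 := by simpa using congrArg Complex.re hab
  have him : a * z.im + b * w.im = 0 := by simpa using congrArg Complex.im hab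
  constructor
  · exact (mul_eq_zero.1 (by linear_combination w.im * hre - w.re * him)).resolve_right h
  · exact (mul_eq_zero.1 (by linear_combination z.re * him - z.im * hre)).resolve_right h

variable (him : L.ω₁.im = 0) (harea : L.ω₁.re * L.ω₂.im = Real.pi / 2)
include him harea

lemma two_div_pi_mul_setIntegral_fundDomain {f : Torus L → ℝ} (hf : AEStronglyMeasurable f) :
    2 / Real.pi * ∫ z in fundDomain L.ω₁ L.ω₂, f (z : Torus L) = ∫ x, f x := by
  rw [Torus.integral_eq_mul_setIntegral_fundDomain hf, him, harea, zero_mul, sub_zero,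
    abs_of_pos (by positivity), inv_div]

variable (hs : IsCanonicalSection L (sigmaStar L.ω₁ L.ω₂))

lemma Aconst_eq_integral_potential :
    Aconst L.ω₁ L.ω₂ = ∫ x, hs.potential x := by
  rw [Aconst, ← two_div_pi_mul_setIntegral_fundDomain him harea
    hs.integrable_potential.aestronglyMeasurable]
  congr 1
  exact integral_congr_ae (ae_restrict_of_ae (hs.ae_potential_mk_eq.mono fun z => Eq.symm))

theorem two_div_pi_mul_setIntegral_exp_Utorus {N : ℕ} (β : ℝ) (w : Fin N → ℂ) :
    2 / Real.pi * ∫ z in fundDomain L.ω₁ L.ω₂, Real.exp (∑ j, β * Utorus L.ω₁ L.ω₂ z (w j)) =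
      packingIntegral volume hs.potential β (fun j => (w j : Torus L)) := by
  have hmeas : Measurable fun x : Torus L =>
      Real.exp (∑ j, β * (hs.potential (x - w j) - ∫ y, hs.potential y)) := by
    have := hs.measurable_potential
    fun_prop
  rw [packingIntegral, ← two_div_pi_mul_setIntegral_fundDomain him harea hmeas.aestronglyMeasurable]
  congr 1
  refine integral_congr_ae (ae_restrict_of_ae ?_)
  filter_upwards [ae_all_iff.2 fun j => hs.ae_potential_mk_sub_eq (w j)] with z hz
  simp only [Utorus, Aconst_eq_integral_potential him harea hs, ← hz, QuotientAddGroup.mk_sub]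

theorem ThetaTorus_eq_iInf_packingIntegral (N : ℕ) (β : ℝ) :
    ThetaTorus L.ω₁ L.ω₂ N β =
      ⨅ w : Fin N → Torus L, packingIntegral volume hs.potential β w := by
  simp only [ThetaTorus, two_div_pi_mul_setIntegral_exp_Utorus him harea hs]
  exact QuotientAddGroup.mk_surjective.comp_left.iInf_comp
    (fun w : Fin N → Torus L => packingIntegral volume hs.potential β w)

end TorusPacking

/-- uniform bounds on the torus packing number. -/
theorem thetaTorus_bounds (ω₁ ω₂ : ℂ)
    (h1 : ω₁.im = 0) (h1' : 0 < ω₁.re) (h2 : 0 < ω₂.im)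
    (harea : ω₁.re * ω₂.im = Real.pi / 2) :
    ∃ K : ℝ, 1 < K ∧
      ∀ N : ℕ, 1 ≤ N → ∀ β : ℝ, 0 < β →
        1 ≤ ThetaTorus ω₁ ω₂ N β ∧ ThetaTorus ω₁ ω₂ N β ≤ K ^ β := by
  let L : PeriodPair := ⟨ω₁, ω₂, linearIndependent_pair_of_det_ne_zero (by
    rw [h1, zero_mul, sub_zero, harea]
    positivity)⟩
  have hs : IsCanonicalSection L (sigmaStar ω₁ ω₂) :=
    isCanonicalSection_sigmaStar (L := L) (fun h => h1'.ne' (congrArg Complex.re h)) h1 harea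
  obtain ⟨M, hM⟩ := hs.exists_potential_le
  obtain ⟨B, hB, hbalanced⟩ := hs.exists_hasBalancedTranslates_fin
  refine ⟨Real.exp B, Real.one_lt_exp_iff.2 hB, fun N _ β hβ => ?_⟩
  rw [ThetaTorus_eq_iInf_packingIntegral h1 harea hs]
  have hlower := one_le_packingIntegral (ι := Fin N) hs.integrable_potential hM hβ.le
  obtain ⟨w, hw⟩ := (hbalanced N).exists_packingIntegral_le hs.integrable_potential hM hβ.le
  exact ⟨le_ciInf hlower, (ciInf_le ⟨1, Set.forall_mem_range.2 hlower⟩ w).trans hw⟩
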